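/- Let a budget profile be given (integer m ≥ 1, strictly increasing positive real privacy budgets ε_1 < ε_2 < ⋯ < ε_m, positive integer counts n_1, …, n_m, n = n_1 + ⋯ + n_m, Z = (n − n_m)(n − n_m + 1/4)), and let d ≥ 1 and s̃ ≥ 1 be integers. Then errO_{1/d}(1/2) + (1/s̃) · Σ_{k=1}^{s̃} errO_1(2^{−(k+1)}) ≤ min( 8/(d² ε_1²) , Z + 8/(d² ε_m²) ) + min( 32(4^{s̃} − 1)/(3 s̃ ε_1²) , Z + 32(4^{s̃} − 1)/(3 s̃ ε_m²) ). (Arithmetic form of Theorem 2: the average per-time-slot error of Personalized Budget Distribution, which is the sum of the dissimilarity-calculation error and the average noisy-publication error, is at most min(8/(d²ε_L²), Z + 8/(d²ε_R²)) + min(32(4^{s̃}−1)/(3s̃ε_L²), Z + 32(4^{s̃}−1)/(3s̃ε_R²)) with ε_L = ε_1 and ε_R = ε_m, provided at most s̃ publications occur per window.) -/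

import Mathlib

open Finset

/-- Sampling probability p_k(θ) = (e^{ε_k} − 1)/(e^{θ} − 1). -/
noncomputable def samplingP {m : ℕ} (ε : Fin m → ℝ) (k : Fin m) (θ : ℝ) : ℝ :=
  (Real.exp (ε k) - 1) / (Real.exp θ - 1)

/-- Sampling error err_s(θ). -/
noncomputable def errS {m : ℕ} (ε : Fin m → ℝ) (nn : Fin m → ℕ) (θ : ℝ) : ℝ :=
  (∑ k, if ε k < θ then (nn k : ℝ) * samplingP ε k θ * (1 - samplingP ε k θ) else 0)
    + (∑ k, if ε k < θ then (nn k : ℝ) * (1 - samplingP ε k θ) else 0) ^ 2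

/-- Noise error err_dp(θ) = 2I²/θ². -/
noncomputable def errDP (I θ : ℝ) : ℝ := 2 * I ^ 2 / θ ^ 2

/-- Total error err(θ) = err_s(θ) + err_dp(θ). -/
noncomputable def errTot {m : ℕ} (ε : Fin m → ℝ) (nn : Fin m → ℕ) (I θ : ℝ) : ℝ :=
  errS ε nn θ + errDP I θ

/-- OBS error: errO_I = min_{1 ≤ j ≤ m} err(ε_j). -/
noncomputable def errO {m : ℕ} (hm : 0 < m) (ε : Fin m → ℝ) (nn : Fin m → ℕ) (I : ℝ) : ℝ :=
  Finset.univ.inf' (Finset.univ_nonempty_iff.mpr (Fin.pos_iff_nonempty.mp hm))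
    (fun j => errTot ε nn I (ε j))

/-- Index of the smallest budget ε_1. -/
def firstIdx {m : ℕ} (hm : 0 < m) : Fin m := ⟨0, hm⟩

/-- Index of the largest budget ε_m. -/
def lastIdx {m : ℕ} (hm : 0 < m) : Fin m := ⟨m - 1, Nat.sub_lt hm Nat.one_pos⟩

/-- Z = (n − n_m)(n − n_m + 1/4). -/
noncomputable def Zval {m : ℕ} (hm : 0 < m) (nn : Fin m → ℕ) : ℝ :=
  ((∑ j, (nn j : ℝ)) - nn (lastIdx hm)) * ((∑ j, (nn j : ℝ)) - nn (lastIdx hm) + 1 / 4)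

/-- N-th square harmonic number H²_N = Σ_{k=1}^N 1/k². -/
noncomputable def sqHarmonic (N : ℕ) : ℝ := ∑ k ∈ Finset.Icc 1 N, 1 / (k : ℝ) ^ 2

theorem errO_le_errTot {m : ℕ} (hm : 0 < m) (ε : Fin m → ℝ) (nn : Fin m → ℕ) (I : ℝ)
    (j : Fin m) : errO hm ε nn I ≤ errTot ε nn I (ε j) :=
  Finset.inf'_le (fun j => errTot ε nn I (ε j)) (Finset.mem_univ j)

theorem errS_firstIdx {m : ℕ} (hm : 0 < m) {ε : Fin m → ℝ} (nn : Fin m → ℕ)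
    (hmono : StrictMono ε) : errS ε nn (ε (firstIdx hm)) = 0 := by
  have hle : ∀ k, ¬ ε k < ε (firstIdx hm) := fun k =>
    not_lt.mpr (hmono.monotone (Fin.mk_le_of_le_val (Nat.zero_le _)))
  simp [errS, hle]

theorem samplingP_mem_Icc {m : ℕ} {ε : Fin m → ℝ} {k : Fin m} {θ : ℝ} (hk : 0 < ε k)
    (hθ : ε k < θ) : samplingP ε k θ ∈ Set.Icc (0 : ℝ) 1 := by
  have h₁ : 1 < Real.exp (ε k) := Real.one_lt_exp_iff.mpr hk
  have h₂ : Real.exp (ε k) < Real.exp θ := Real.exp_lt_exp.mpr hθ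
  exact ⟨div_nonneg (by linarith) (by linarith), (div_le_one (by linarith)).mpr (by linarith)⟩

theorem errS_lastIdx_le {m : ℕ} (hm : 0 < m) {ε : Fin m → ℝ} (nn : Fin m → ℕ)
    (hpos : ∀ j, 0 < ε j) : errS ε nn (ε (lastIdx hm)) ≤ Zval hm nn := by
  set θ := ε (lastIdx hm)
  set S : ℝ := (∑ j, (nn j : ℝ)) - nn (lastIdx hm) with hS
  have hsum : ∑ k, (if k = lastIdx hm then 0 else (nn k : ℝ)) = S := by
    rw [hS, eq_sub_iff_add_eq, ← Finset.sum_erase_add _ _ (Finset.mem_univ (lastIdx hm)),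
      ← Finset.sum_erase_add _ (fun j => (nn j : ℝ)) (Finset.mem_univ (lastIdx hm))]
    simp only [if_true, add_zero]
    congr 1
    exact Finset.sum_congr rfl fun k hk => if_neg (Finset.ne_of_mem_erase hk)
  have hne : ∀ k, ε k < θ → k ≠ lastIdx hm := fun k hk h => by
    rw [h] at hk
    exact lt_irrefl _ hk
  have hvar : (∑ k, if ε k < θ then (nn k : ℝ) * samplingP ε k θ * (1 - samplingP ε k θ) else 0)
      ≤ S * (1 / 4) := by
    rw [← hsum, Finset.sum_mul]
    refine Finset.sum_le_sum fun k _ => ?_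
    have hn : (0 : ℝ) ≤ nn k := Nat.cast_nonneg _
    by_cases hk : ε k < θ
    · rw [if_pos hk, if_neg (hne k hk), mul_assoc]
      exact mul_le_mul_of_nonneg_left
        (by nlinarith [sq_nonneg (samplingP ε k θ - 1 / 2)]) hn
    · rw [if_neg hk]
      split_ifs <;> positivity
  have hbias : (∑ k, if ε k < θ then (nn k : ℝ) * (1 - samplingP ε k θ) else 0) ≤ S := by
    rw [← hsum]
    refine Finset.sum_le_sum fun k _ => ?_
    have hn : (0 : ℝ) ≤ nn k := Nat.cast_nonneg _
    by_cases hk : ε k < θ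
    · rw [if_pos hk, if_neg (hne k hk)]
      exact mul_le_of_le_one_right hn (by linarith [(samplingP_mem_Icc (hpos k) hk).1])
    · rw [if_neg hk]
      split_ifs <;> positivity
  have hbias_nonneg :
      0 ≤ ∑ k, if ε k < θ then (nn k : ℝ) * (1 - samplingP ε k θ) else 0 := by
    refine Finset.sum_nonneg fun k _ => ?_
    split_ifs with hk
    · exact mul_nonneg (Nat.cast_nonneg _)
        (by linarith [(samplingP_mem_Icc (hpos k) hk).2])
    · exact le_rfl
  have hZ : Zval hm nn = S * (1 / 4) + S ^ 2 := by
    rw [Zval, ← hS]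
    ring
  rw [hZ, errS]
  exact add_le_add hvar (pow_le_pow_left₀ hbias_nonneg hbias 2)

theorem errO_scaled_le_first {m : ℕ} (hm : 0 < m) {ε : Fin m → ℝ} (nn : Fin m → ℕ)
    (hmono : StrictMono ε) (I : ℝ) {β : ℝ} (hβ : 0 < β) :
    errO hm (fun j => β * ε j) nn I ≤ errDP I (β * ε (firstIdx hm)) := by
  have h := errO_le_errTot hm (fun j => β * ε j) nn I (firstIdx hm)
  rwa [errTot, errS_firstIdx hm nn (hmono.const_mul hβ), zero_add] at h

theorem errO_scaled_le_last {m : ℕ} (hm : 0 < m) {ε : Fin m → ℝ} (nn : Fin m → ℕ)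
    (hpos : ∀ j, 0 < ε j) (I : ℝ) {β : ℝ} (hβ : 0 < β) :
    errO hm (fun j => β * ε j) nn I ≤ Zval hm nn + errDP I (β * ε (lastIdx hm)) :=
  (errO_le_errTot hm (fun j => β * ε j) nn I (lastIdx hm)).trans
    (add_le_add_left (errS_lastIdx_le hm nn fun j => mul_pos hβ (hpos j)) _)

theorem errDP_half (d x : ℝ) : errDP (1 / d) (1 / 2 * x) = 8 / (d ^ 2 * x ^ 2) := by
  simp only [errDP, div_eq_mul_inv, mul_pow, mul_inv, inv_pow, one_mul, inv_inv]
  ring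

theorem errDP_half_pow (k : ℕ) (x : ℝ) :
    errDP 1 ((1 / 2) ^ (k + 1) * x) = 8 * 4 ^ k / x ^ 2 := by
  have h : ((1 / 2 : ℝ) ^ (k + 1)) ^ 2 = (4 * 4 ^ k)⁻¹ := by
    rw [← pow_mul, mul_comm (k + 1) 2, pow_mul, ← pow_succ', ← inv_pow]
    norm_num
  rw [errDP, mul_pow, h, div_eq_mul_inv, mul_inv, inv_inv]
  ring

theorem sum_errDP_half_pow (s : ℕ) (x : ℝ) :
    ∑ k ∈ Finset.Icc 1 s, errDP 1 ((1 / 2) ^ (k + 1) * x) = 32 * (4 ^ s - 1) / (3 * x ^ 2) := by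
  induction s with
  | zero => simp
  | succ s ih =>
    rw [Finset.sum_Icc_succ_top (by omega), ih, errDP_half_pow, pow_succ]
    simp only [div_eq_mul_inv, mul_inv]
    ring

/-- Arithmetic form of Theorem 2: the average per-time-slot error of Personalized
Budget Distribution (dissimilarity-calculation error plus average noisy-publication
error) is bounded as stated. -/
theorem pbd_average_error_bound (m : ℕ) (hm : 0 < m) (ε : Fin m → ℝ) (nn : Fin m → ℕ)
    (hpos : ∀ j, 0 < ε j) (hmono : StrictMono ε) (hcount : ∀ j, 0 < nn j)
    (d : ℕ) (hd : 1 ≤ d) (s : ℕ) (hs : 1 ≤ s) :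
    errO hm (fun j => (1 / 2 : ℝ) * ε j) nn (1 / (d : ℝ))
      + (1 / (s : ℝ)) *
          ∑ k ∈ Finset.Icc 1 s, errO hm (fun j => (1 / 2 : ℝ) ^ (k + 1) * ε j) nn 1 ≤
      min (8 / ((d : ℝ) ^ 2 * (ε (firstIdx hm)) ^ 2))
          (Zval hm nn + 8 / ((d : ℝ) ^ 2 * (ε (lastIdx hm)) ^ 2))
        + min (32 * ((4 : ℝ) ^ s - 1) / (3 * (s : ℝ) * (ε (firstIdx hm)) ^ 2))
            (Zval hm nn + 32 * ((4 : ℝ) ^ s - 1) / (3 * (s : ℝ) * (ε (lastIdx hm)) ^ 2)) := by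
  have hs' : (0 : ℝ) < s := by exact_mod_cast hs
  have havg : ∀ x : ℝ,
      1 / (s : ℝ) * (32 * ((4 : ℝ) ^ s - 1) / (3 * x ^ 2)) =
        32 * ((4 : ℝ) ^ s - 1) / (3 * (s : ℝ) * x ^ 2) := fun x => by
    simp only [div_eq_mul_inv, mul_inv]
    ring
  refine add_le_add (le_min ?_ ?_) (le_min ?_ ?_)
  · rw [← errDP_half]
    exact errO_scaled_le_first hm nn hmono _ (by norm_num)
  · rw [← errDP_half]
    exact errO_scaled_le_last hm nn hpos _ (by norm_num)
  · rw [← havg, ← sum_errDP_half_pow]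
    gcongr with k
    exact errO_scaled_le_first hm nn hmono _ (by positivity)
  · have hZ : Zval hm nn = 1 / (s : ℝ) * ∑ _k ∈ Finset.Icc 1 s, Zval hm nn := by
      rw [Finset.sum_const, Nat.card_Icc, Nat.add_sub_cancel, nsmul_eq_mul]
      field_simp
    rw [← havg, ← sum_errDP_half_pow, hZ, ← mul_add, ← Finset.sum_add_distrib]
    gcongr with k
    exact errO_scaled_le_last hm nn hpos _ (by positivity)
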